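/- Uniform kernel bound away from the spectral edges: fix α with −2/3 < α < −1/2 and set B^N = (−√2 − N^α, −√2 + N^α) ∪ (√2 − N^α, √2 + N^α) and U^N = ℝ \ B^N. Then there exists a constant c > 0 such that for every integer N ≥ 1 and all x, y ∈ U^N, |L^N(x,y)| ≤ c. -/

import Mathlib

open Real MeasureTheory Filter Set

/-- Physicists' Hermite polynomial `H_n(x) = (-1)^n e^{x^2} (d/dx)^n e^{-x^2}`. -/
noncomputable def hermiteP (n : ℕ) (x : ℝ) : ℝ :=
  (-1 : ℝ) ^ n * Real.exp (x ^ 2) * iteratedDeriv n (fun t => Real.exp (-t ^ 2)) x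

/-- Oscillator wave function `ψ_n(x) = (√π 2^n n!)^{-1/2} e^{-x^2/2} H_n(x)`. -/
noncomputable def osc (n : ℕ) (x : ℝ) : ℝ :=
  (Real.sqrt (Real.sqrt Real.pi * 2 ^ n * (n.factorial : ℝ)))⁻¹ *
    Real.exp (-x ^ 2 / 2) * hermiteP n x

/-- The kernel `K^N(x,y) = Σ_{k=0}^{N-1} ψ_k(x) ψ_k(y)`. -/
noncomputable def kerK (N : ℕ) (x y : ℝ) : ℝ :=
  ∑ k ∈ Finset.range N, osc k x * osc k y

/-- The rescaled kernel `L^N(x,y) = N^{-1/2} K^N(√N x, √N y)`. -/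
noncomputable def kerL (N : ℕ) (x y : ℝ) : ℝ :=
  (Real.sqrt (N : ℝ))⁻¹ * kerK N (Real.sqrt (N : ℝ) * x) (Real.sqrt (N : ℝ) * y)

/-- The edge neighborhood `B^N`. -/
noncomputable def Bedge (α : ℝ) (N : ℕ) : Set ℝ :=
  Set.Ioo (-Real.sqrt 2 - (N : ℝ) ^ α) (-Real.sqrt 2 + (N : ℝ) ^ α) ∪
    Set.Ioo (Real.sqrt 2 - (N : ℝ) ^ α) (Real.sqrt 2 + (N : ℝ) ^ α)

/-!
The oscillator functions satisfy the ladder relations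
`ψ_n' = √(2n) ψ_{n-1} - x ψ_n` and `ψ_n' = x ψ_n - √(2(n+1)) ψ_{n+1}`. In the derivative of
`ψ_n ψ_{n+1}` the terms with `x` cancel, leaving `√(2(n+1)) (ψ_n² - ψ_{n+1}²)`, so all `ψ_n` have
the same `L²` norm. Averaging the two relations makes the derivative of `∑ ψ_n²` telescope:
`d/dx K^N(x,x) = -√(2N) ψ_N(x) ψ_{N-1}(x)`. Integrating over `(x, ∞)` and using `‖ψ_n‖₂ = 1` gives
`K^N(x,x) ≤ √(2N)` on the whole line, and Cauchy–Schwarz passes to `K^N(x,y)`.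
-/

open Polynomial

lemma derivative_hermite_succ (n : ℕ) :
    derivative (hermite (n + 1)) = (n + 1 : ℤ[X]) * hermite n := by
  induction n with
  | zero => simp
  | succ n ih =>
    rw [hermite_succ (n + 1), derivative_sub, derivative_mul, derivative_X, ih, derivative_mul]
    simp only [derivative_add, derivative_natCast, derivative_one, hermite_succ n]
    push_cast
    ring

lemma derivative_hermite (n : ℕ) : derivative (hermite n) = (n : ℤ[X]) * hermite (n - 1) := by
  cases n with
  | zero => simp
  | succ n => simpa using derivative_hermite_succ n

lemma iteratedDeriv_exp_neg_sq (n : ℕ) (x : ℝ) :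
    iteratedDeriv n (fun t => Real.exp (-t ^ 2)) x =
      (-1) ^ n * √2 ^ n * aeval (√2 * x) (hermite n) * Real.exp (-x ^ 2) := by
  have gaussian_rescale (t : ℝ) : -t ^ 2 = -((√2 * t) ^ 2 / 2) := by
    rw [mul_pow, Real.sq_sqrt zero_le_two]
    ring
  simp only [gaussian_rescale]
  rw [iteratedDeriv_comp_const_mul (f := fun y => Real.exp (-(y ^ 2 / 2))) (by fun_prop) √2,
    iteratedDeriv_eq_iterate]
  simp only [deriv_gaussian_eq_hermite_mul_gaussian]
  ring

lemma hermiteP_eq_aeval_hermite (n : ℕ) (x : ℝ) :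
    hermiteP n x = √2 ^ n * aeval (√2 * x) (hermite n) := by
  have sign_sq : (-1 : ℝ) ^ n * (-1) ^ n = 1 := by rw [← mul_pow]; simp
  have exp_cancel : Real.exp (x ^ 2) * Real.exp (-x ^ 2) = 1 := by rw [← Real.exp_add]; simp
  rw [hermiteP, iteratedDeriv_exp_neg_sq]
  linear_combination (√2 ^ n * aeval (√2 * x) (hermite n)) *
    (sign_sq * (Real.exp (x ^ 2) * Real.exp (-x ^ 2)) + exp_cancel)

lemma integrable_eval_mul_exp_neg_mul_sq {b : ℝ} (hb : 0 < b) (p : ℝ[X]) :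
    Integrable fun x : ℝ => p.eval x * Real.exp (-b * x ^ 2) := by
  induction p using Polynomial.induction_on' with
  | add p q hp hq => simpa only [eval_add, add_mul] using hp.fun_add hq
  | monomial n a =>
    have hn : (-1 : ℝ) < n := neg_one_lt_zero.trans_le n.cast_nonneg
    simpa only [eval_monomial, Real.rpow_natCast, mul_assoc] using
      (integrable_rpow_mul_exp_neg_mul_sq hb hn).const_mul a

lemma hasDerivAt_aeval_mul_exp_neg_sq_div_two {R : Type*} [CommSemiring R] [Algebra R ℝ]
    (p : R[X]) (c x : ℝ) :
    HasDerivAt (fun t : ℝ => aeval (c * t) p * Real.exp (-t ^ 2 / 2))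
      ((c * aeval (c * x) (derivative p) - x * aeval (c * x) p) * Real.exp (-x ^ 2 / 2)) x := by
  have hp : HasDerivAt (fun t : ℝ => aeval (c * t) p) (aeval (c * x) (derivative p) * c) x := by
    have hlin : HasDerivAt (fun t : ℝ => c * t) c x := by
      simpa using (hasDerivAt_id x).const_mul c
    exact (p.hasDerivAt_aeval (c * x)).comp x hlin
  have hexp : HasDerivAt (fun t : ℝ => Real.exp (-t ^ 2 / 2))
      (Real.exp (-x ^ 2 / 2) * (-(2 * x) / 2)) x := by
    simpa using ((hasDerivAt_pow 2 x).fun_neg.div_const 2).exp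
  exact (hp.fun_mul hexp).congr_deriv (by ring)

lemma integral_Ioi_of_hasDerivAt_of_integrable {E : Type*} [NormedAddCommGroup E]
    [NormedSpace ℝ E] [CompleteSpace E] {f f' : ℝ → E} {a : ℝ}
    (hderiv : ∀ x ∈ Ici a, HasDerivAt f (f' x) x) (hf' : IntegrableOn f' (Ioi a))
    (hf : IntegrableOn f (Ioi a)) : ∫ x in Ioi a, f' x = -f a := by
  have hlim : Tendsto f atTop (nhds 0) :=
    tendsto_zero_of_hasDerivAt_of_integrableOn_Ioi
      (fun x hx => hderiv x (Ioi_subset_Ici_self hx)) hf' hf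
  simpa using integral_Ioi_of_hasDerivAt_of_tendsto' hderiv hf' hlim

/-- The normalization `(√π n!)^{-1/2}` of the oscillator functions when they are written with the
probabilists' Hermite polynomials; see `osc_eq_aeval_hermite`. -/
noncomputable def oscNorm (n : ℕ) : ℝ := (√(√π * n.factorial))⁻¹

lemma sqrt_succ_mul_oscNorm_succ (n : ℕ) : √(n + 1) * oscNorm (n + 1) = oscNorm n := by
  have hsqrt : √(√π * (n + 1).factorial) = √(n + 1) * √(√π * n.factorial) := by
    rw [← Real.sqrt_mul (by positivity), Nat.factorial_succ]
    push_cast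
    ring_nf
  have hpos : √(n + 1 : ℝ) ≠ 0 := by positivity
  rw [oscNorm, oscNorm, hsqrt, mul_inv, mul_inv_cancel_left₀ hpos]

lemma osc_eq_aeval_hermite (n : ℕ) (x : ℝ) :
    osc n x = oscNorm n * (aeval (√2 * x) (hermite n) * Real.exp (-x ^ 2 / 2)) := by
  have sqrt_two_pow : √((2 : ℝ) ^ n) = √2 ^ n := by
    rw [Real.sqrt_eq_iff_mul_self_eq (by positivity) (by positivity), ← mul_pow,
      Real.mul_self_sqrt zero_le_two]
  have hsqrt : √(√π * 2 ^ n * n.factorial) = √2 ^ n * √(√π * n.factorial) := by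
    rw [mul_right_comm, mul_comm, Real.sqrt_mul (by positivity), sqrt_two_pow]
  have hpos : √2 ^ n ≠ 0 := by positivity
  rw [osc, hermiteP_eq_aeval_hermite, hsqrt, oscNorm, mul_inv]
  field_simp

lemma hasDerivAt_osc (n : ℕ) (x : ℝ) :
    HasDerivAt (osc n) (oscNorm n * ((√2 * aeval (√2 * x) (derivative (hermite n)) -
      x * aeval (√2 * x) (hermite n)) * Real.exp (-x ^ 2 / 2))) x := by
  rw [funext (osc_eq_aeval_hermite n)]
  exact (hasDerivAt_aeval_mul_exp_neg_sq_div_two (hermite n) √2 x).const_mul (oscNorm n)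

-- For `n = 0` the coefficient `√(2 * 0)` makes the value of `osc (0 - 1)` irrelevant.
lemma hasDerivAt_osc_lowering (n : ℕ) (x : ℝ) :
    HasDerivAt (osc n) (√(2 * n) * osc (n - 1) x - x * osc n x) x := by
  refine (hasDerivAt_osc n x).congr_deriv ?_
  have hnorm : √n * oscNorm (n - 1) = n * oscNorm n := by
    cases n with
    | zero => simp
    | succ n =>
      have hsq : √(n + 1 : ℝ) * √(n + 1) = n + 1 := Real.mul_self_sqrt (by positivity)
      push_cast [Nat.add_sub_cancel]
      rw [← sqrt_succ_mul_oscNorm_succ, ← mul_assoc, hsq]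
  rw [derivative_hermite, map_mul, map_natCast, Real.sqrt_mul zero_le_two,
    osc_eq_aeval_hermite, osc_eq_aeval_hermite]
  linear_combination (-√2 * aeval (√2 * x) (hermite (n - 1)) * Real.exp (-x ^ 2 / 2)) * hnorm

lemma hasDerivAt_osc_raising (n : ℕ) (x : ℝ) :
    HasDerivAt (osc n) (x * osc n x - √(2 * (n + 1)) * osc (n + 1) x) x := by
  refine (hasDerivAt_osc n x).congr_deriv ?_
  have hsq : √(2 : ℝ) * √2 = 2 := Real.mul_self_sqrt zero_le_two
  rw [Real.sqrt_mul zero_le_two, osc_eq_aeval_hermite, osc_eq_aeval_hermite, hermite_succ, map_sub,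
    map_mul, aeval_X, ← sqrt_succ_mul_oscNorm_succ]
  linear_combination (√(n + 1) * oscNorm (n + 1) * x * aeval (√2 * x) (hermite n) *
    Real.exp (-x ^ 2 / 2)) * hsq

lemma integrable_osc_mul_osc (m n : ℕ) : Integrable fun x => osc m x * osc n x := by
  let hermiteSqrtTwo (k : ℕ) : ℝ[X] := ((hermite k).map (Int.castRingHom ℝ)).comp (C √2 * X)
  have eval_hermiteSqrtTwo (k : ℕ) (x : ℝ) :
      (hermiteSqrtTwo k).eval x = aeval (√2 * x) (hermite k) := by
    simp [hermiteSqrtTwo, aeval_def, eval₂_eq_eval_map]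
  have hint := (integrable_eval_mul_exp_neg_mul_sq one_pos
    (hermiteSqrtTwo m * hermiteSqrtTwo n)).const_mul (oscNorm m * oscNorm n)
  refine hint.congr (Eventually.of_forall fun x => ?_)
  have hexp : Real.exp (-1 * x ^ 2) = Real.exp (-x ^ 2 / 2) * Real.exp (-x ^ 2 / 2) := by
    rw [← Real.exp_add]
    ring_nf
  simp only [eval_mul, eval_hermiteSqrtTwo, osc_eq_aeval_hermite, hexp]
  ring

lemma integrable_osc_sq (n : ℕ) : Integrable fun x => osc n x ^ 2 := by
  simpa only [sq] using integrable_osc_mul_osc n n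

lemma hasDerivAt_osc_mul_osc_succ (n : ℕ) (x : ℝ) :
    HasDerivAt (fun t => osc n t * osc (n + 1) t)
      (√(2 * (n + 1)) * (osc n x ^ 2 - osc (n + 1) x ^ 2)) x := by
  have hlowering := hasDerivAt_osc_lowering (n + 1) x
  push_cast [Nat.add_sub_cancel] at hlowering
  exact ((hasDerivAt_osc_raising n x).fun_mul hlowering).congr_deriv (by ring)

lemma hasDerivAt_osc_sq (n : ℕ) (x : ℝ) :
    HasDerivAt (fun t => osc n t ^ 2)
      (√(2 * n) * (osc n x * osc (n - 1) x) -
        √(2 * (n + 1)) * (osc (n + 1) x * osc n x)) x := by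
  simp only [sq]
  exact ((hasDerivAt_osc_lowering n x).fun_mul (hasDerivAt_osc_raising n x)).congr_deriv (by ring)

lemma integral_osc_zero_sq : ∫ x, osc 0 x ^ 2 = 1 := by
  have hsq (x : ℝ) : osc 0 x ^ 2 = (√π)⁻¹ * Real.exp (-1 * x ^ 2) := by
    have hexp : Real.exp (-x ^ 2 / 2) ^ 2 = Real.exp (-1 * x ^ 2) := by
      rw [← Real.exp_nat_mul]
      ring_nf
    simp [osc_eq_aeval_hermite, oscNorm, mul_pow, hexp, Real.sq_sqrt (Real.sqrt_nonneg π)]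
  simp only [hsq, integral_const_mul, integral_gaussian, div_one]
  exact inv_mul_cancel₀ (by positivity)

lemma integral_osc_sq (n : ℕ) : ∫ x, osc n x ^ 2 = 1 := by
  induction n with
  | zero => exact integral_osc_zero_sq
  | succ n ih =>
    have hzero := integral_eq_zero_of_hasDerivAt_of_integrable (hasDerivAt_osc_mul_osc_succ n)
      (((integrable_osc_sq n).sub (integrable_osc_sq (n + 1))).const_mul _)
      (integrable_osc_mul_osc n (n + 1))
    have hpos : √(2 * (n + 1 : ℝ)) ≠ 0 := by positivity
    rw [integral_const_mul, mul_eq_zero_iff_left hpos,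
      integral_sub (integrable_osc_sq n) (integrable_osc_sq (n + 1)), ih] at hzero
    linarith

lemma setIntegral_osc_mul_osc_le_one (s : Set ℝ) (m n : ℕ) :
    ∫ x in s, osc m x * osc n x ≤ 1 := by
  have hint : Integrable fun x => (osc m x ^ 2 + osc n x ^ 2) / 2 :=
    ((integrable_osc_sq m).add (integrable_osc_sq n)).div_const 2
  have am_gm (x : ℝ) : osc m x * osc n x ≤ (osc m x ^ 2 + osc n x ^ 2) / 2 := by
    linarith [two_mul_le_add_sq (osc m x) (osc n x)]
  calc ∫ x in s, osc m x * osc n x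
      ≤ ∫ x in s, (osc m x ^ 2 + osc n x ^ 2) / 2 :=
        setIntegral_mono (integrable_osc_mul_osc m n).integrableOn hint.integrableOn am_gm
    _ ≤ ∫ x, (osc m x ^ 2 + osc n x ^ 2) / 2 :=
        setIntegral_le_integral hint (Eventually.of_forall fun x => by positivity)
    _ = 1 := by
        rw [integral_div, integral_add (integrable_osc_sq m) (integrable_osc_sq n),
          integral_osc_sq, integral_osc_sq]
        norm_num

lemma kerK_self (N : ℕ) (x : ℝ) : kerK N x x = ∑ k ∈ Finset.range N, osc k x ^ 2 := by
  simp only [kerK, sq]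

lemma integrable_kerK_self (N : ℕ) : Integrable fun x => kerK N x x :=
  integrable_finsetSum _ fun k _ => integrable_osc_mul_osc k k

lemma hasDerivAt_kerK_self (N : ℕ) (x : ℝ) :
    HasDerivAt (fun t => kerK N t t) (-(√(2 * N) * (osc N x * osc (N - 1) x))) x := by
  let coupling (n : ℕ) : ℝ := √(2 * n) * (osc n x * osc (n - 1) x)
  have hsum : HasDerivAt (fun t => ∑ k ∈ Finset.range N, osc k t ^ 2)
      (∑ k ∈ Finset.range N, (coupling k - coupling (k + 1))) x :=
    HasDerivAt.fun_sum fun k _ => by simpa [coupling] using hasDerivAt_osc_sq k x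
  rw [Finset.sum_range_sub'] at hsum
  simpa [coupling, kerK_self] using hsum

lemma kerK_self_eq_integral_Ioi (N : ℕ) (x : ℝ) :
    kerK N x x = √(2 * N) * ∫ t in Ioi x, osc N t * osc (N - 1) t := by
  have hftc := integral_Ioi_of_hasDerivAt_of_integrable (a := x)
    (fun t _ => hasDerivAt_kerK_self N t)
    ((integrable_osc_mul_osc N (N - 1)).const_mul _).neg.integrableOn
    (integrable_kerK_self N).integrableOn
  rw [integral_neg, integral_const_mul] at hftc
  exact (neg_injective hftc).symm

lemma kerK_self_le (N : ℕ) (x : ℝ) : kerK N x x ≤ √(2 * N) := by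
  rw [kerK_self_eq_integral_Ioi]
  exact mul_le_of_le_one_right (Real.sqrt_nonneg _) (setIntegral_osc_mul_osc_le_one _ _ _)

lemma kerK_self_nonneg (N : ℕ) (x : ℝ) : 0 ≤ kerK N x x :=
  Finset.sum_nonneg fun k _ => mul_self_nonneg (osc k x)

lemma kerK_sq_le_kerK_self_mul_kerK_self (N : ℕ) (x y : ℝ) :
    kerK N x y ^ 2 ≤ kerK N x x * kerK N y y := by
  rw [kerK_self, kerK_self]
  exact Finset.sum_mul_sq_le_sq_mul_sq _ _ _

lemma abs_kerK_le (N : ℕ) (x y : ℝ) : |kerK N x y| ≤ √(2 * N) := by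
  refine abs_le_of_sq_le_sq ?_ (Real.sqrt_nonneg _)
  calc kerK N x y ^ 2 ≤ kerK N x x * kerK N y y := kerK_sq_le_kerK_self_mul_kerK_self N x y
    _ ≤ √(2 * N) * √(2 * N) :=
        mul_le_mul (kerK_self_le N x) (kerK_self_le N y) (kerK_self_nonneg N y)
          (Real.sqrt_nonneg _)
    _ = √(2 * N) ^ 2 := (sq _).symm

theorem kernel_bound_away_from_edges_general {N : ℕ} (hN : 1 ≤ N) (x y : ℝ) :
    |kerL N x y| ≤ √2 := by
  have hpos : 0 < √(N : ℝ) := Real.sqrt_pos.2 (by exact_mod_cast hN)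
  rw [kerL, abs_mul, abs_of_pos (inv_pos.2 hpos), inv_mul_le_iff₀ hpos]
  calc |kerK N (√N * x) (√N * y)| ≤ √(2 * N) := abs_kerK_le N _ _
    _ = √N * √2 := by rw [Real.sqrt_mul zero_le_two, mul_comm]

/-- Uniform kernel bound away from the spectral edges. -/
theorem kernel_bound_away_from_edges (α : ℝ) (hα1 : -2/3 < α) (hα2 : α < -1/2) :
    ∃ c : ℝ, 0 < c ∧ ∀ N : ℕ, 1 ≤ N → ∀ x y : ℝ,
      x ∈ Set.univ \ Bedge α N → y ∈ Set.univ \ Bedge α N → |kerL N x y| ≤ c := by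
  exact ⟨√2, by positivity, fun N hN x y _ _ => kernel_bound_away_from_edges_general hN x y⟩
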